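/- Parameter-flip symmetry of the twisted reflection equation: if an N×N matrix-valued function K satisfies the cross-conjugated twisted reflection equation (CtRE) associated with the parameters (q, s), then the function u ↦ (K(u^{-1}))^w satisfies the cross-conjugated twisted reflection equation (CtRE) associated with the parameters (q^{-1}, s^{-1}), where M^w denotes transposition across the antidiagonal: (M^w)_{ij} = M_{N+1−j, N+1−i}. -/

import Mathlib

/-!
The map `wT2`, antidiagonal transposition in both tensor factors, is an anti-automorphism of
`End(ℂ^N ⊗ ℂ^N)`, so it reverses each side of the reflection equation. It fixes `R(u)` and
`R21(u)` (`wT2_RBJ`, `wT2_R21`), because `i ↦ N + 1 - i` combined with transposition preserves the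
triangular shape of `R_q`. On the other hand the very definition of `R(u)` gives
`R_{q⁻¹}(u⁻¹) = P R_q(u) P` (`RBJ_inv_inv`). Applying `wT2` to the equation for `(q, s)` at
`(u⁻¹, v⁻¹)` therefore yields the equation for `(q⁻¹, s⁻¹)` at `(u, v)` with its two sides
exchanged, provided that `wT2` turns `R^∨` for `(q, s)` at `x⁻¹` into `R^∨21` for `(q⁻¹, s⁻¹)`
at `x`. This last point (`Rvee21_inv`) is checked on entries: both sides involve the same entry of
`R`, multiplied by powers of `-q` that agree whenever the index sum is conserved, and all other
entries of `R` vanish (`RBJ_eq_zero`).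
-/

open Matrix
open scoped Kronecker

noncomputable section

/-- 1-based matrix unit `E_{a b}` in the `N × N` complex matrices. -/
def Em (N : ℕ) (a b : ℕ) : Matrix (Fin N) (Fin N) ℂ :=
  Matrix.of fun i j => if (i : ℕ) + 1 = a ∧ (j : ℕ) + 1 = b then 1 else 0

/-- The flip (permutation) operator `P = Σ_{i,j} E_{ij} ⊗ E_{ji}`. -/
def Pmat (N : ℕ) : Matrix (Fin N × Fin N) (Fin N × Fin N) ℂ :=
  ∑ i ∈ Finset.Icc 1 N, ∑ j ∈ Finset.Icc 1 N, Em N i j ⊗ₖ Em N j i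

/-- The constant R-matrix `R_q`. -/
def Rconst (N : ℕ) (q : ℂ) : Matrix (Fin N × Fin N) (Fin N × Fin N) ℂ :=
  (∑ i ∈ Finset.Icc 1 N, ∑ j ∈ Finset.Icc 1 N,
      (if i = j then q else 1) • (Em N i i ⊗ₖ Em N j j))
    + ∑ i ∈ Finset.Icc 1 N, ∑ j ∈ Finset.Icc 1 N,
        (if i < j then q - q⁻¹ else 0) • (Em N i j ⊗ₖ Em N j i)

/-- `f_q(u) = 1/(q - q⁻¹ u)`. -/
def fBJ (q u : ℂ) : ℂ := (q - q⁻¹ * u)⁻¹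

/-- The Bazhanov–Jimbo R-matrix `R(u) = f_q(u) R_q + f_{q⁻¹}(u⁻¹) P R_{q⁻¹} P`. -/
def RBJ (N : ℕ) (q u : ℂ) : Matrix (Fin N × Fin N) (Fin N × Fin N) ℂ :=
  fBJ q u • Rconst N q + fBJ q⁻¹ u⁻¹ • (Pmat N * Rconst N q⁻¹ * Pmat N)

/-- `X1 = X ⊗ I`. -/
def M1 (N : ℕ) (X : Matrix (Fin N) (Fin N) ℂ) : Matrix (Fin N × Fin N) (Fin N × Fin N) ℂ :=
  X ⊗ₖ (1 : Matrix (Fin N) (Fin N) ℂ)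

/-- `X2 = I ⊗ X`. -/
def M2 (N : ℕ) (X : Matrix (Fin N) (Fin N) ℂ) : Matrix (Fin N × Fin N) (Fin N × Fin N) ℂ :=
  (1 : Matrix (Fin N) (Fin N) ℂ) ⊗ₖ X

/-- `R21(u) = P R(u) P`. -/
def R21 (N : ℕ) (q u : ℂ) : Matrix (Fin N × Fin N) (Fin N × Fin N) ℂ :=
  Pmat N * RBJ N q u * Pmat N

/-- Transposition in the first tensor factor. -/
def t1 (N : ℕ) (X : Matrix (Fin N × Fin N) (Fin N × Fin N) ℂ) :
    Matrix (Fin N × Fin N) (Fin N × Fin N) ℂ :=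
  Matrix.of fun p r => X (r.1, p.2) (p.1, r.2)

/-- The charge conjugation matrix `C = Σ_i (-q)^i E_{ī i}` where `ī = N+1-i`. -/
def Cmat (N : ℕ) (q : ℂ) : Matrix (Fin N) (Fin N) ℂ :=
  ∑ i ∈ Finset.Icc 1 N, (-q) ^ i • Em N (N + 1 - i) i

/-- The C-conjugated R-matrix `R^∨(u) = C2⁻¹ R^{t1}(q̃² u⁻¹) C2` with `q̃ = s^N`. -/
def Rvee (N : ℕ) (q s u : ℂ) : Matrix (Fin N × Fin N) (Fin N × Fin N) ℂ :=
  (M2 N (Cmat N q))⁻¹ * t1 N (RBJ N q ((s ^ N) ^ 2 * u⁻¹)) * M2 N (Cmat N q)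

/-- `R^∨21(u) = P R^∨(u) P`. -/
def Rvee21 (N : ℕ) (q s u : ℂ) : Matrix (Fin N × Fin N) (Fin N × Fin N) ℂ :=
  Pmat N * Rvee N q s u * Pmat N

/-- The untwisted reflection equation at spectral parameters `(u, v)`. -/
def REeq (N : ℕ) (q : ℂ) (K : ℂ → Matrix (Fin N) (Fin N) ℂ) (u v : ℂ) : Prop :=
  R21 N q (u / v) * M1 N (K u) * RBJ N q (u * v) * M2 N (K v)
    = M2 N (K v) * R21 N q (u * v) * M1 N (K u) * RBJ N q (u / v)

/-- `K` satisfies the untwisted reflection equation (RE) for all `u, v`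
for which all factors are defined. -/
def IsRESol (N : ℕ) (q : ℂ) (K : ℂ → Matrix (Fin N) (Fin N) ℂ) : Prop :=
  ∀ u v : ℂ, u ≠ 0 → v ≠ 0 → u / v ≠ q ^ 2 → u / v ≠ q⁻¹ ^ 2 →
    u * v ≠ q ^ 2 → u * v ≠ q⁻¹ ^ 2 → REeq N q K u v

/-- The cross-conjugated twisted reflection equation at `(u, v)`. -/
def CtREeq (N : ℕ) (q s : ℂ) (K : ℂ → Matrix (Fin N) (Fin N) ℂ) (u v : ℂ) : Prop :=
  R21 N q (u / v) * M1 N (K u) * Rvee N q s (u * v) * M2 N (K v)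
    = M2 N (K v) * Rvee21 N q s (u * v) * M1 N (K u) * RBJ N q (u / v)

/-- `K` satisfies the cross-conjugated twisted reflection equation (CtRE) for all
`u, v` for which all factors are defined. -/
def IsCtRESol (N : ℕ) (q s : ℂ) (K : ℂ → Matrix (Fin N) (Fin N) ℂ) : Prop :=
  ∀ u v : ℂ, u ≠ 0 → v ≠ 0 → u / v ≠ q ^ 2 → u / v ≠ q⁻¹ ^ 2 →
    (s ^ N) ^ 2 * (u * v)⁻¹ ≠ q ^ 2 → (s ^ N) ^ 2 * (u * v)⁻¹ ≠ q⁻¹ ^ 2 →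
    CtREeq N q s K u v

/-- Transposition across the antidiagonal: `(M^w)_{ij} = M_{N+1-j, N+1-i}`. -/
def wT (N : ℕ) (M : Matrix (Fin N) (Fin N) ℂ) : Matrix (Fin N) (Fin N) ℂ :=
  Matrix.of fun i j => M (Fin.rev j) (Fin.rev i)

/-! ### Entries of the structure matrices -/

lemma sum_Icc_index {N : ℕ} (i k : Fin N) (g : ℕ → ℕ → ℂ) :
    ∑ a ∈ Finset.Icc 1 N, ∑ b ∈ Finset.Icc 1 N,
      (if (i : ℕ) + 1 = a ∧ (k : ℕ) + 1 = b then g a b else 0) = g (i + 1) (k + 1) := by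
  have hi := i.isLt
  have hk := k.isLt
  simp only [ite_and]
  rw [Finset.sum_eq_single_of_mem ((i : ℕ) + 1) (by simp)
      (fun a _ ha => by simp [ha.symm]),
    Finset.sum_eq_single_of_mem ((k : ℕ) + 1) (by simp)
      (fun b _ hb => by simp [hb.symm])]
  simp

lemma Pmat_apply {N : ℕ} (p r : Fin N × Fin N) :
    Pmat N p r = if p = r.swap then 1 else 0 := by
  obtain ⟨i, k⟩ := p
  obtain ⟨j, l⟩ := r
  refine Eq.trans ?_ ((sum_Icc_index i k
    (fun a b => if (l : ℕ) + 1 = a ∧ (j : ℕ) + 1 = b then 1 else 0)).trans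
      (by simp [Fin.ext_iff, eq_comm]))
  simp only [Pmat, Matrix.sum_apply, kroneckerMap_apply, Em, Matrix.of_apply]
  refine Finset.sum_congr rfl fun a _ => Finset.sum_congr rfl fun b _ => ?_
  split_ifs <;> first | rfl | (exfalso; tauto) | simp

lemma Pmat_conj {N : ℕ} (X : Matrix (Fin N × Fin N) (Fin N × Fin N) ℂ) :
    Pmat N * X * Pmat N = X.submatrix Prod.swap Prod.swap := by
  ext p r
  have h : ∀ a b : Fin N × Fin N, a = b.swap ↔ a.swap = b := fun a b =>
    ⟨fun h => by simp [h], fun h => by simp [← h]⟩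
  rw [Matrix.mul_apply, Finset.sum_eq_single r.swap]
  · rw [Matrix.mul_apply, Finset.sum_eq_single p.swap]
    · simp [Pmat_apply]
    · intro b _ hb
      rw [Pmat_apply, if_neg, zero_mul]
      rw [h]; exact fun e => hb e.symm
    · simp
  · intro b _ hb
    rw [Pmat_apply, if_neg hb, mul_zero]
  · simp

lemma Rconst_apply {N : ℕ} (q : ℂ) (i k j l : Fin N) :
    Rconst N q (i, k) (j, l) =
      (if i = j ∧ k = l then (if i = k then q else 1) else 0)
        + (if i = l ∧ k = j then (if i < j then q - q⁻¹ else 0) else 0) := by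
  simp only [Rconst, Matrix.add_apply, Matrix.sum_apply, Matrix.smul_apply, kroneckerMap_apply,
    Em, Matrix.of_apply, smul_eq_mul]
  congr 1
  · refine Eq.trans ?_ ((sum_Icc_index i k (fun a b =>
      if (j : ℕ) + 1 = a ∧ (l : ℕ) + 1 = b then (if a = b then q else 1) else 0)).trans
        (by simp [Fin.ext_iff, eq_comm]))
    refine Finset.sum_congr rfl fun a _ => Finset.sum_congr rfl fun b _ => ?_
    split_ifs <;> first | rfl | (exfalso; tauto) | simp
  · refine Eq.trans ?_ ((sum_Icc_index i k (fun a b =>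
      if (l : ℕ) + 1 = a ∧ (j : ℕ) + 1 = b then (if a < b then q - q⁻¹ else 0) else 0)).trans
        (by simp only [Fin.ext_iff, Fin.lt_def]; grind))
    refine Finset.sum_congr rfl fun a _ => Finset.sum_congr rfl fun b _ => ?_
    split_ifs <;> first | rfl | (exfalso; tauto) | simp

lemma Cmat_apply {N : ℕ} (q : ℂ) (i j : Fin N) :
    Cmat N q i j = if i = j.rev then (-q) ^ ((j : ℕ) + 1) else 0 := by
  have hj := j.isLt
  simp only [Cmat, Matrix.sum_apply, Matrix.smul_apply, Em, Matrix.of_apply, smul_eq_mul]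
  rw [Finset.sum_eq_single_of_mem ((j : ℕ) + 1) (by simp)
    (fun a _ ha => by simp [ha.symm])]
  have : ((i : ℕ) + 1 = N + 1 - ((j : ℕ) + 1)) ↔ i = j.rev := by
    rw [Fin.ext_iff, Fin.val_rev]; omega
  simp only [this, and_true, mul_ite, mul_one, mul_zero]

/-- The inverse of `Cmat N q`, for `q ≠ 0`. -/
def CmatInv (N : ℕ) (q : ℂ) : Matrix (Fin N) (Fin N) ℂ :=
  Matrix.of fun i j => if j = i.rev then ((-q) ^ ((i : ℕ) + 1))⁻¹ else 0

lemma M2_Cmat_inv {N : ℕ} {q : ℂ} (hq : q ≠ 0) :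
    (M2 N (Cmat N q))⁻¹ = M2 N (CmatInv N q) := by
  apply Matrix.inv_eq_left_inv
  rw [M2, M2, ← Matrix.mul_kronecker_mul, one_mul]
  have : CmatInv N q * Cmat N q = 1 := by
    ext i j
    rw [Matrix.mul_apply, Finset.sum_eq_single i.rev]
    · have h0 : (-q) ^ ((j : ℕ) + 1) ≠ 0 := pow_ne_zero _ (neg_ne_zero.mpr hq)
      by_cases h : i = j
      · subst h
        simp [CmatInv, Cmat_apply, h0]
      · simp [CmatInv, Cmat_apply, h]
    · intro b _ hb
      simp [CmatInv, hb]
    · simp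
  rw [this, Matrix.one_kronecker_one]

lemma M2_mul_apply {N : ℕ} (A : Matrix (Fin N) (Fin N) ℂ)
    (X : Matrix (Fin N × Fin N) (Fin N × Fin N) ℂ) (a b : Fin N) (r : Fin N × Fin N) :
    (M2 N A * X) (a, b) r = ∑ k, A b k * X (a, k) r := by
  simp [M2, Matrix.mul_apply, Fintype.sum_prod_type, Matrix.one_apply]

lemma mul_M2_apply {N : ℕ} (A : Matrix (Fin N) (Fin N) ℂ)
    (X : Matrix (Fin N × Fin N) (Fin N × Fin N) ℂ) (c d : Fin N) (p : Fin N × Fin N) :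
    (X * M2 N A) p (c, d) = ∑ k, X p (c, k) * A k d := by
  simp [M2, Matrix.mul_apply, Fintype.sum_prod_type, Matrix.one_apply]

lemma Rvee_apply {N : ℕ} {q : ℂ} (hq : q ≠ 0) (s u : ℂ) (a b c d : Fin N) :
    Rvee N q s u (a, b) (c, d) = ((-q) ^ ((b : ℕ) + 1))⁻¹
      * RBJ N q ((s ^ N) ^ 2 * u⁻¹) (c, b.rev) (a, d.rev) * (-q) ^ ((d : ℕ) + 1) := by
  rw [Rvee, M2_Cmat_inv hq, mul_M2_apply, Finset.sum_eq_single d.rev]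
  · rw [M2_mul_apply, Finset.sum_eq_single b.rev]
    · simp [CmatInv, Cmat_apply, t1]
    · intro k _ hk
      simp [CmatInv, hk]
    · simp
  · intro k _ hk
    simp [Cmat_apply, hk]
  · simp

/-! ### Symmetries of the R-matrix -/

/-- Inverting both the parameter and the spectral variable exchanges the two summands of `R(u)`
up to the flip; no genericity of `u` is needed. -/
lemma RBJ_inv_inv (N : ℕ) (q u : ℂ) : RBJ N q⁻¹ u⁻¹ = R21 N q u := by
  simp only [R21, RBJ, inv_inv, Pmat_conj]
  ext p r
  simp [add_comm]

lemma RBJ_apply {N : ℕ} (q u : ℂ) (i k j l : Fin N) :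
    RBJ N q u (i, k) (j, l) = fBJ q u * Rconst N q (i, k) (j, l)
      + fBJ q⁻¹ u⁻¹ * Rconst N q⁻¹ (k, i) (l, j) := by
  simp [RBJ, Pmat_conj]

/-- Weight conservation (the ice rule): `R(u)` preserves the sum of the two indices. -/
lemma RBJ_eq_zero {N : ℕ} (q u : ℂ) {i k j l : Fin N} (h : (i : ℕ) + k ≠ j + l) :
    RBJ N q u (i, k) (j, l) = 0 := by
  have h1 : ¬ (i = j ∧ k = l) := by rintro ⟨rfl, rfl⟩; exact h rfl
  have h2 : ¬ (i = l ∧ k = j) := by rintro ⟨rfl, rfl⟩; exact h (add_comm _ _)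
  rw [RBJ_apply, Rconst_apply, Rconst_apply, if_neg h1, if_neg h2,
    if_neg (fun e => h1 e.symm), if_neg (fun e => h2 e.symm)]
  simp

/-- Antidiagonal transposition in both tensor factors. -/
def wT2 (N : ℕ) (X : Matrix (Fin N × Fin N) (Fin N × Fin N) ℂ) :
    Matrix (Fin N × Fin N) (Fin N × Fin N) ℂ :=
  (X.submatrix (Prod.map Fin.rev Fin.rev) (Prod.map Fin.rev Fin.rev))ᵀ

lemma wT2_mul {N : ℕ} (X Y : Matrix (Fin N × Fin N) (Fin N × Fin N) ℂ) :
    wT2 N (X * Y) = wT2 N Y * wT2 N X := by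
  have h : Function.Bijective (Prod.map Fin.rev Fin.rev : Fin N × Fin N → Fin N × Fin N) :=
    Fin.rev_bijective.prodMap Fin.rev_bijective
  rw [wT2, ← Matrix.submatrix_mul_equiv X Y _ (Equiv.ofBijective _ h), Matrix.transpose_mul]
  rfl

lemma wT2_M1 {N : ℕ} (A : Matrix (Fin N) (Fin N) ℂ) : wT2 N (M1 N A) = M1 N (wT N A) := by
  ext ⟨i, k⟩ ⟨j, l⟩
  simp [wT2, M1, wT, Matrix.one_apply, eq_comm]

lemma wT2_M2 {N : ℕ} (A : Matrix (Fin N) (Fin N) ℂ) : wT2 N (M2 N A) = M2 N (wT N A) := by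
  ext ⟨i, k⟩ ⟨j, l⟩
  simp [wT2, M2, wT, Matrix.one_apply, eq_comm]

lemma wT2_swap {N : ℕ} (X : Matrix (Fin N × Fin N) (Fin N × Fin N) ℂ) :
    wT2 N (Pmat N * X * Pmat N) = Pmat N * wT2 N X * Pmat N := by
  rw [Pmat_conj, Pmat_conj]
  rfl

lemma Rconst_rev {N : ℕ} (q : ℂ) (i k j l : Fin N) :
    Rconst N q (j.rev, l.rev) (i.rev, k.rev) = Rconst N q (i, k) (j, l) := by
  simp only [Rconst_apply, Fin.rev_inj, Fin.rev_lt_rev]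
  grind

/-- `w ⊗ w` maps `E_{ij} ⊗ E_{ji}` to `E_{j̄ī} ⊗ E_{īj̄}`, and `i < j` iff `j̄ < ī`,
so it fixes `R(u)`. -/
lemma wT2_RBJ (N : ℕ) (q u : ℂ) : wT2 N (RBJ N q u) = RBJ N q u := by
  ext ⟨i, k⟩ ⟨j, l⟩
  simp only [wT2, Matrix.transpose_apply, Matrix.submatrix_apply, Prod.map_apply, RBJ_apply,
    Rconst_rev]

lemma wT2_R21 (N : ℕ) (q u : ℂ) : wT2 N (R21 N q u) = R21 N q u := by
  rw [R21, wT2_swap, wT2_RBJ]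

/-- Compatibility of the charge-conjugated R-matrix with the parameter flip. In each entry both
sides carry the same entry of `R`; the powers of `-q` coming from `C` agree wherever that entry
can be nonzero, by weight conservation. -/
lemma Rvee21_inv {N : ℕ} {q : ℂ} (hq : q ≠ 0) (s x : ℂ) :
    Rvee21 N q⁻¹ s⁻¹ x = wT2 N (Rvee N q s x⁻¹) := by
  rw [Rvee21, Pmat_conj]
  ext ⟨a, b⟩ ⟨c, d⟩
  have hz : (s⁻¹ ^ N) ^ 2 * x⁻¹ = ((s ^ N) ^ 2 * x)⁻¹ := by
    rw [mul_inv, inv_pow, inv_pow]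
  simp only [wT2, Matrix.transpose_apply, Matrix.submatrix_apply, Prod.map_apply, Prod.swap,
    Rvee_apply hq, Rvee_apply (inv_ne_zero hq), hz, RBJ_inv_inv, R21, Pmat_conj, inv_inv,
    Fin.rev_rev]
  by_cases h : ((a.rev : Fin N) : ℕ) + d = c.rev + b
  · have hq' : -q ≠ 0 := neg_ne_zero.mpr hq
    have e1 : -q⁻¹ = (-q)⁻¹ := by rw [inv_neg]
    rw [e1, inv_pow, inv_pow, inv_inv, mul_right_comm, mul_right_comm _ _ ((-q) ^ _)]
    congr 1
    rw [← div_eq_mul_inv, ← div_eq_inv_mul, div_eq_div_iff (pow_ne_zero _ hq')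
      (pow_ne_zero _ hq'), ← pow_add, ← pow_add]
    congr 1
    have ha := a.isLt
    have hb := b.isLt
    have hc := c.isLt
    have hd := d.isLt
    simp only [Fin.val_rev] at h ⊢
    omega
  · rw [RBJ_eq_zero q _ h]
    simp

lemma wT2_wT2 {N : ℕ} (X : Matrix (Fin N × Fin N) (Fin N × Fin N) ℂ) :
    wT2 N (wT2 N X) = X := by
  ext ⟨i, k⟩ ⟨j, l⟩
  simp [wT2]

lemma Rvee_inv {N : ℕ} {q : ℂ} (hq : q ≠ 0) (s x : ℂ) :
    Rvee N q⁻¹ s⁻¹ x = wT2 N (Rvee21 N q s x⁻¹) := by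
  have h := Rvee21_inv (N := N) (inv_ne_zero hq) s⁻¹ x⁻¹
  rw [inv_inv, inv_inv, inv_inv] at h
  rw [h, wT2_wT2]

/-! ### The parameter flip -/

/-- parameter-flip symmetry of the twisted reflection equation: if `K`
solves (CtRE) for `(q, s)`, then `u ↦ (K(u⁻¹))^w` solves (CtRE) for `(q⁻¹, s⁻¹)`. -/
theorem statement8 (N : ℕ) (hN : 2 ≤ N) (q s : ℂ) (hq : q ≠ 0) (hs : s ^ 2 = -q)
    (K : ℂ → Matrix (Fin N) (Fin N) ℂ) (hK : IsCtRESol N q s K) :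
    IsCtRESol N q⁻¹ s⁻¹ (fun u => wT N (K u⁻¹)) := by
  intro u v hu hv h1 h2 h3 h4
  have hdiv : u⁻¹ / v⁻¹ = (u / v)⁻¹ := by rw [inv_div_inv, inv_div]
  have hmul : u⁻¹ * v⁻¹ = (u * v)⁻¹ := (mul_inv u v).symm
  have hz : (s⁻¹ ^ N) ^ 2 * (u * v)⁻¹ = ((s ^ N) ^ 2 * (u * v))⁻¹ := by
    rw [mul_inv ((s ^ N) ^ 2), inv_pow, inv_pow]
  rw [inv_inv] at h2 h4
  have h := hK u⁻¹ v⁻¹ (inv_ne_zero hu) (inv_ne_zero hv)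
    (by rw [hdiv]; exact fun e => h1 (by rw [inv_pow, ← e, inv_inv]))
    (by rw [hdiv, inv_pow]; exact fun e => h2 (inv_injective e))
    (by rw [hmul, inv_inv]; exact fun e => h3 (by rw [hz, e, inv_pow]))
    (by rw [hmul, inv_inv]; exact fun e => h4 (by rw [hz, e, inv_pow, inv_inv]))
  rw [CtREeq, hdiv, hmul] at h
  have h' := congrArg (wT2 N) h
  simp only [wT2_mul, wT2_M1, wT2_M2, wT2_R21, wT2_RBJ, ← Rvee21_inv hq, ← Rvee_inv hq] at h'
  have e1 : RBJ N q⁻¹ (u / v) = R21 N q (u / v)⁻¹ := by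
    rw [← RBJ_inv_inv, inv_inv]
  have e2 : R21 N q⁻¹ (u / v) = RBJ N q (u / v)⁻¹ := by
    rw [← RBJ_inv_inv, inv_inv]
  rw [CtREeq, e1, e2]
  simp only [Matrix.mul_assoc] at h' ⊢
  exact h'.symm

end
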